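/- Let k be a field. Consider the injective ring homomorphism k[x][[y]] → k[x,1/x][[y]] obtained by applying the inclusion of polynomials into Laurent polynomials to each power series coefficient. Then there exists an element f of k[x,1/x][[y]] that is transcendental over k[x][[y]]; i.e., f satisfies no nonzero polynomial equation with coefficients in the image of k[x][[y]]. Consequently the fraction field of k[x,1/x][[y]] is a transcendental (non-algebraic) extension of the fraction field of k[x][[y]]. -/

import Mathlib

/-!
Let `t` be an element of a ring `A` such that every nonzero element of `A` is divisible by only
finitely many powers of `t`, and let `B` be an extension of `A` containing `t⁻¹`. A Liouville
argument shows that `f = ∑ t⁻ⁿ yⁿ`, with `n` running over the factorials, is transcendental over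
`A⟦y⟧`. If `b` is a large factorial, then `t^b f` agrees, in degrees below the next factorial,
with a polynomial `q` over `A` which is congruent to `y^b` modulo a large power of `t`. If `f` is
a root of `c_d z^d + ⋯ + c_0`, then `∑ c_i t^(b(d - i)) q^i` vanishes in degrees below the next
factorial, while modulo that power of `t` it equals `c_d y^(bd)`. So every coefficient of `c_d` is
divisible by arbitrarily large powers of `t`, that is, `c_d = 0`.
-/

section

open Polynomial PowerSeries

section ScaleRoots

variable {R : Type*} [CommRing R]

theorem C_sub_dvd_scaleRoots_sub (p : R[X]) (r s : R) :
    Polynomial.C (r - s) ∣ p.scaleRoots r - p.scaleRoots s := by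
  refine (Polynomial.C_dvd_iff_dvd_coeff _ _).2 fun i => ?_
  rw [Polynomial.coeff_sub, coeff_scaleRoots, coeff_scaleRoots, ← mul_sub]
  exact (sub_dvd_pow_sub_pow r s _).mul_left _

theorem dvd_eval_scaleRoots_sub (p : R[X]) {a r x y : R} (hr : a ∣ r) (hxy : a ∣ x - y) :
    a ∣ (p.scaleRoots r).eval x - p.leadingCoeff * y ^ p.natDegree := by
  have hscale : a ∣ (p.scaleRoots r).eval x - (p.scaleRoots 0).eval x := by
    have h := eval_dvd (x := x) (C_sub_dvd_scaleRoots_sub p r 0)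
    rw [sub_zero, Polynomial.eval_C, Polynomial.eval_sub] at h
    exact hr.trans h
  have hpoint : a ∣ (p.scaleRoots 0).eval x - (p.scaleRoots 0).eval y :=
    hxy.trans (sub_dvd_eval_sub x y _)
  have hlead : (p.scaleRoots 0).eval y = p.leadingCoeff * y ^ p.natDegree := by
    rw [scaleRoots_zero, eval_smul, eval_pow, eval_X, smul_eq_mul]
  rw [← hlead]
  simpa only [sub_add_sub_cancel] using dvd_add hscale hpoint

end ScaleRoots

section Coefficients

variable {A B : Type*}

theorem C_dvd_iff_forall_dvd_coeff [CommSemiring A] {a : A} {f : A⟦X⟧} :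
    PowerSeries.C a ∣ f ↔ ∀ n, a ∣ PowerSeries.coeff n f := by
  constructor
  · rintro ⟨g, rfl⟩ n
    rw [PowerSeries.coeff_C_mul]
    exact dvd_mul_right a _
  · intro h
    choose g hg using h
    exact ⟨PowerSeries.mk g, PowerSeries.ext fun n => by
      rw [PowerSeries.coeff_C_mul, PowerSeries.coeff_mk, hg]⟩

instance faithfulSMul_powerSeries [CommSemiring A] [CommSemiring B] [Algebra A B]
    [FaithfulSMul A B] : FaithfulSMul A⟦X⟧ B⟦X⟧ :=
  (faithfulSMul_iff_algebraMap_injective _ _).2 <|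
    PowerSeries.map_injective _ (FaithfulSMul.algebraMap_injective A B)

end Coefficients

/-- Sets of exponents with arbitrarily long gaps: there are elements `b` whose distance to the
previous element is as large as desired, and whose ratio to the next element is as small as
desired. This is the gap condition of Liouville's transcendence argument. -/
def HasLiouvilleGaps (S : Set ℕ) : Prop :=
  ∀ m, ∃ b ∈ S, m ≤ b ∧ (∀ n ∈ S, n < b → n + m ≤ b) ∧ ∀ n ∈ S, b < n → m * b < n

theorem hasLiouvilleGaps_range_factorial : HasLiouvilleGaps (Set.range Nat.factorial) := by
  intro m
  have hpos : 0 < (m + 1).factorial := Nat.factorial_pos _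
  have hself : m + 2 ≤ (m + 2).factorial := Nat.self_le_factorial _
  refine ⟨(m + 2).factorial, ⟨m + 2, rfl⟩, by omega, ?_, ?_⟩
  · rintro _ ⟨i, rfl⟩ hi
    have hle : i.factorial ≤ (m + 1).factorial :=
      Nat.factorial_le (Nat.lt_succ_iff.1 (Nat.monotone_factorial.reflect_lt hi))
    have hsucc : (m + 2).factorial = (m + 2) * (m + 1).factorial := Nat.factorial_succ _
    nlinarith
  · rintro _ ⟨i, rfl⟩ hi
    have hle : (m + 3).factorial ≤ i.factorial :=
      Nat.factorial_le (Nat.monotone_factorial.reflect_lt hi)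
    have hsucc : (m + 3).factorial = (m + 3) * (m + 2).factorial := Nat.factorial_succ _
    nlinarith

/-- The power series `∑ s ^ n * X ^ n`, with `n` running over the set `S`. It is
transcendental for `s = t⁻¹` when `S` has Liouville gaps. -/
noncomputable def lacunarySeries {B : Type*} [Semiring B] (S : Set ℕ) (s : B) : B⟦X⟧ :=
  PowerSeries.mk (S.indicator (s ^ ·))

/-- The part of degree at most `b` of `lacunarySeries S t⁻¹`, multiplied by `t ^ b` so that its
coefficients lie in the ring containing `t`. -/
noncomputable def clearedTruncation {A : Type*} [Semiring A] (S : Set ℕ) (t : A) (b : ℕ) : A⟦X⟧ :=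
  PowerSeries.mk ((S ∩ Set.Iic b).indicator fun n => t ^ (b - n))

theorem C_pow_dvd_clearedTruncation_sub {A : Type*} [CommRing A] {S : Set ℕ} {b m : ℕ}
    (hb : b ∈ S) (hgap : ∀ n ∈ S, n < b → n + m ≤ b) (t : A) :
    PowerSeries.C (t ^ m) ∣ clearedTruncation S t b - PowerSeries.X ^ b := by
  refine C_dvd_iff_forall_dvd_coeff.2 fun n => ?_
  rw [map_sub, clearedTruncation, PowerSeries.coeff_mk, PowerSeries.coeff_X_pow]
  obtain rfl | hne := eq_or_ne n b
  · simp [hb]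
  · rw [if_neg hne, sub_zero]
    by_cases hn : n ∈ S ∩ Set.Iic b
    · rw [Set.indicator_of_mem hn]
      have := hgap n hn.1 (lt_of_le_of_ne hn.2 hne)
      exact pow_dvd_pow t (by omega)
    · rw [Set.indicator_of_notMem hn]
      exact dvd_zero _

section Transcendence

variable {A B : Type*} [CommRing A] [CommRing B] [Algebra A B]

theorem X_pow_dvd_algebraMap_clearedTruncation_sub {S : Set ℕ} {b N : ℕ}
    (hgap : ∀ n ∈ S, b < n → N ≤ n) {t : A} {s : B} (hts : algebraMap A B t * s = 1) :
    PowerSeries.X ^ N ∣ algebraMap A⟦X⟧ B⟦X⟧ (clearedTruncation S t b) -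
      algebraMap A⟦X⟧ B⟦X⟧ (PowerSeries.C (t ^ b)) * lacunarySeries S s := by
  refine PowerSeries.X_pow_dvd_iff.2 fun n hn => ?_
  rw [PowerSeries.algebraMap_apply'', PowerSeries.algebraMap_apply'', PowerSeries.map_C, map_sub,
    PowerSeries.coeff_C_mul, PowerSeries.coeff_map, clearedTruncation, lacunarySeries,
    PowerSeries.coeff_mk, PowerSeries.coeff_mk, sub_eq_zero]
  by_cases hnS : n ∈ S
  · have hnb : n ≤ b := not_lt.1 fun hbn => (hgap n hnS hbn).not_gt hn
    rw [Set.indicator_of_mem (Set.mem_inter hnS hnb), Set.indicator_of_mem hnS, map_pow, map_pow]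
    calc algebraMap A B t ^ (b - n)
        = algebraMap A B t ^ (b - n) * (algebraMap A B t * s) ^ n := by rw [hts, one_pow, mul_one]
      _ = algebraMap A B t ^ b * s ^ n := by
          rw [mul_pow, ← mul_assoc, ← pow_add, Nat.sub_add_cancel hnb]
  · rw [Set.indicator_of_notMem fun h => hnS h.1, Set.indicator_of_notMem hnS, map_zero, mul_zero]

variable [FaithfulSMul A B]

theorem coeff_eval_scaleRoots_eq_zero {p : A⟦X⟧[X]} {f : B⟦X⟧} (hf : aeval f p = 0)
    {c q : A⟦X⟧} {N : ℕ}
    (happrox : PowerSeries.X ^ N ∣ algebraMap A⟦X⟧ B⟦X⟧ q - algebraMap A⟦X⟧ B⟦X⟧ c * f)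
    {n : ℕ} (hn : n < N) : PowerSeries.coeff n ((p.scaleRoots c).eval q) = 0 := by
  have hdvd : PowerSeries.X ^ N ∣ algebraMap A⟦X⟧ B⟦X⟧ ((p.scaleRoots c).eval q) := by
    have h := happrox.trans
      (sub_dvd_eval_sub _ _ ((p.scaleRoots c).map (algebraMap A⟦X⟧ B⟦X⟧)))
    rwa [eval_map_algebraMap, eval_map_algebraMap, scaleRoots_aeval_eq_zero hf, sub_zero,
      aeval_algebraMap_apply_eq_algebraMap_eval] at h
  have hcoeff := PowerSeries.X_pow_dvd_iff.1 hdvd n hn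
  rw [PowerSeries.algebraMap_apply'', PowerSeries.coeff_map] at hcoeff
  exact (FaithfulSMul.algebraMap_eq_zero_iff A B).1 hcoeff

theorem dvd_coeff_leadingCoeff_of_approx {p : A⟦X⟧[X]} {f : B⟦X⟧} (hf : aeval f p = 0)
    {a c : A} {q : A⟦X⟧} {b j : ℕ} (hac : a ∣ c)
    (hq : PowerSeries.C a ∣ q - PowerSeries.X ^ b)
    (happrox : PowerSeries.X ^ (j + b * p.natDegree + 1) ∣
      algebraMap A⟦X⟧ B⟦X⟧ q - algebraMap A⟦X⟧ B⟦X⟧ (PowerSeries.C c) * f) :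
    a ∣ PowerSeries.coeff j p.leadingCoeff := by
  have hcongr := C_dvd_iff_forall_dvd_coeff.1
    (dvd_eval_scaleRoots_sub p (map_dvd PowerSeries.C hac) hq) (j + b * p.natDegree)
  rwa [map_sub, coeff_eval_scaleRoots_eq_zero hf happrox (Nat.lt_succ_self _), zero_sub, dvd_neg,
    ← pow_mul, PowerSeries.coeff_mul_X_pow] at hcongr

theorem transcendental_lacunarySeries {S : Set ℕ} (hS : HasLiouvilleGaps S) {t : A} {s : B}
    (hts : algebraMap A B t * s = 1) (ht : ∀ a : A, a ≠ 0 → FiniteMultiplicity t a) :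
    Transcendental A⟦X⟧ (lacunarySeries S s) := by
  rw [transcendental_iff]
  intro p hp
  by_contra hp0
  obtain ⟨j, hj⟩ : ∃ j, PowerSeries.coeff j p.leadingCoeff ≠ 0 :=
    PowerSeries.exists_coeff_ne_zero_iff_ne_zero.2 (leadingCoeff_ne_zero.2 hp0)
  obtain ⟨m, hm⟩ := ht _ hj
  obtain ⟨b, hbS, hb, hbelow, habove⟩ := hS (j + p.natDegree + (m + 1))
  refine hm (dvd_coeff_leadingCoeff_of_approx hp (pow_dvd_pow t (by omega : m + 1 ≤ b))
    (C_pow_dvd_clearedTruncation_sub hbS (fun n hn hnb => ?_) t)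
    (X_pow_dvd_algebraMap_clearedTruncation_sub (fun n hn hbn => ?_) hts))
  · have := hbelow n hn hnb
    omega
  · have := habove n hn hbn
    nlinarith

theorem statement10_general [IsDomain B] {t : A} (hunit : IsUnit (algebraMap A B t))
    (ht : ∀ a : A, a ≠ 0 → FiniteMultiplicity t a) :
    (∃ f : B⟦X⟧, Transcendental A⟦X⟧ f) ∧
      letI := FractionRing.liftAlgebra A⟦X⟧ (FractionRing B⟦X⟧)
      ¬ Algebra.IsAlgebraic (FractionRing A⟦X⟧) (FractionRing B⟦X⟧) := by
  obtain ⟨s, hts⟩ := hunit.exists_right_inv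
  have htrans := transcendental_lacunarySeries hasLiouvilleGaps_range_factorial hts ht
  refine ⟨⟨_, htrans⟩, fun halg => ?_⟩
  have := IsDomain.of_faithfulSMul A⟦X⟧ B⟦X⟧
  let := FractionRing.liftAlgebra A⟦X⟧ (FractionRing B⟦X⟧)
  have hfrac : Algebra.IsAlgebraic A⟦X⟧ (FractionRing B⟦X⟧) :=
    IsFractionRing.comap_isAlgebraic_iff.2 halg
  have hring := (IsFractionRing.isAlgebraic_iff' A⟦X⟧ B⟦X⟧ (FractionRing B⟦X⟧)).2 hfrac
  exact htrans (hring.isAlgebraic _)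

end Transcendence

instance faithfulSMul_polynomial_laurentPolynomial (R : Type*) [CommSemiring R] :
    FaithfulSMul R[X] (LaurentPolynomial R) :=
  (faithfulSMul_iff_algebraMap_injective _ _).2 Polynomial.toLaurent_injective

theorem finiteMultiplicity_polynomial_X {R : Type*} [CommRing R] {p : R[X]} (hp : p ≠ 0) :
    FiniteMultiplicity Polynomial.X p :=
  have := Nontrivial.of_polynomial_ne hp
  finiteMultiplicity_of_degree_pos_of_monic (by rw [degree_X]; exact zero_lt_one) monic_X hp

end

set_option maxHeartbeats 1000000 in
/-- Over any field `k`, the coefficientwise inclusion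
`k[x][[y]] → k[x,1/x][[y]]` admits transcendental elements: there is an
`f ∈ k[x,1/x][[y]]` satisfying no nonzero polynomial equation over `k[x][[y]]`,
and consequently the induced extension of fraction fields is not algebraic. -/
theorem statement10 (k : Type*) [Field k]
    (hinj : Function.Injective
      ((algebraMap (PowerSeries (LaurentPolynomial k))
          (FractionRing (PowerSeries (LaurentPolynomial k)))).comp
        (PowerSeries.map (Polynomial.toLaurent : Polynomial k →+* LaurentPolynomial k)))) :
    (letI : Algebra (PowerSeries (Polynomial k)) (PowerSeries (LaurentPolynomial k)) :=
        (PowerSeries.map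
          (Polynomial.toLaurent : Polynomial k →+* LaurentPolynomial k)).toAlgebra;
      ∃ f : PowerSeries (LaurentPolynomial k),
        Transcendental (PowerSeries (Polynomial k)) f) ∧
    (letI : Algebra (FractionRing (PowerSeries (Polynomial k)))
        (FractionRing (PowerSeries (LaurentPolynomial k))) :=
        (IsFractionRing.lift hinj :
          FractionRing (PowerSeries (Polynomial k)) →+*
            FractionRing (PowerSeries (LaurentPolynomial k))).toAlgebra;
      ¬ Algebra.IsAlgebraic (FractionRing (PowerSeries (Polynomial k)))
          (FractionRing (PowerSeries (LaurentPolynomial k)))) :=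
  statement10_general (IsLocalization.Away.algebraMap_isUnit Polynomial.X)
    fun _ => finiteMultiplicity_polynomial_X
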